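/- Let (T, B) be a tree decomposition of a graph G rooted at r, let q ≥ 1, and let m_0 < m_1 < … < m_{q−1} be positive integers with m_j dividing m_{j+1} for all 0 ≤ j ≤ q−2. Then the super-highway decomposition (T, B') is a tree decomposition of G and has combinatorial diameter at most 2q + 1. -/

import Mathlib

/-!
STATEMENT 6: Let (T, B) be a tree decomposition of a graph G rooted at r, let q ≥ 1,
and let m_0 < m_1 < … < m_{q−1} be positive integers with m_j dividing m_{j+1} for all
0 ≤ j ≤ q−2. Then the super-highway decomposition (T, B') is a tree decomposition of G
and has combinatorial diameter at most 2q + 1.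
-/

open SimpleGraph

/-- `(T, B)` is a tree decomposition of the graph `G`. -/
structure IsTreeDecomp {V ι : Type*} (G : SimpleGraph V) (T : SimpleGraph ι)
    (B : ι → Set V) : Prop where
  isTree : T.IsTree
  exists_bag : ∀ v : V, ∃ i, v ∈ B i
  edge_bag : ∀ ⦃u v : V⦄, G.Adj u v → ∃ i, u ∈ B i ∧ v ∈ B i
  bag_connected : ∀ (v : V) (i j : ι), v ∈ B i → v ∈ B j →
    ∀ p : T.Walk i j, p.IsPath → ∀ k ∈ p.support, v ∈ B k

/-- One simplification step: delete a redundant internal node `x` (with neighbors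
`u` and `w`, in some labeling of the two neighbors, satisfying `B x ∩ B w ⊆ B u`)
from the list of nodes of a path, joining its two former neighbors. -/
def SimpStep {V ι : Type*} (B : ι → Set V) (l l' : List ι) : Prop :=
  ∃ (l₁ l₂ : List ι) (u x w : ι),
    l = l₁ ++ u :: x :: w :: l₂ ∧ l' = l₁ ++ u :: w :: l₂ ∧
      (B x ∩ B w ⊆ B u ∨ B x ∩ B u ⊆ B w)

/-- The path `T_{s↔t}` has combinatorial length at most `n`: some simplification of
the (unique) path from `s` to `t` has at most `n` edges (i.e. at most `n + 1` nodes). -/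
def CombLenLE {V ι : Type*} (T : SimpleGraph ι) (B : ι → Set V) (s t : ι) (n : ℕ) : Prop :=
  ∀ p : T.Walk s t, p.IsPath →
    ∃ l : List ι, Relation.ReflTransGen (SimpStep B) p.support l ∧ l.length ≤ n + 1

/-- `(T, B)` has combinatorial diameter at most `n`. -/
def CombDiamLE {V ι : Type*} (T : SimpleGraph ι) (B : ι → Set V) (n : ℕ) : Prop :=
  ∀ s t : ι, CombLenLE T B s t n

/-- `par` is the parent map of the tree `T` with respect to the root `r`. -/
def IsParentMap {ι : Type*} (T : SimpleGraph ι) (r : ι) (par : ι → ι) : Prop :=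
  ∀ i, i ≠ r → T.Adj i (par i) ∧
    ∀ p : T.Walk (par i) r, p.IsPath → i ∉ p.support

/-!
Order the nodes by `v ≤ w` iff `w` lies on the path from `v` to the root `r`. In this order the new
bag of `v` is the union of the `B w` over those `w ≥ v` whose layer is at least that of every node
strictly between `v` and `w`.

Scan an upward path from its top to its start, keeping a simplification of the part already seen.
When `v` is put in front of `p, w, …` and `π p ≤ π w`, the node `p` can be deleted, because a vertex
common to the new bags of `p` and `w` also lies in that of `v`. So an upward path simplifies to one
whose layers, the start excluded, strictly decrease. With at most `q + 1` layers in total, such a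
path has at most `q + 1` nodes after its start, and at most `q` if the layer of its top is not the
least one.

A path of the tree climbs to an apex and descends again. If the layer of the apex is not the least
one, the two simplified halves have at most `2 q + 1` nodes in total. If it is the least one, then
the new bag of the apex is contained in that of its neighbour, so the apex itself can be deleted,
which leaves at most `2 q + 2` nodes.
-/

section Simplification

variable {V ι : Type*} {B : ι → Set V} {l l' : List ι}

/-- `Simplifies B l l'` says that the node list `l'` is a simplification of the node list `l`: it
arises from `l` by repeatedly deleting redundant internal nodes. -/
abbrev Simplifies (B : ι → Set V) : List ι → List ι → Prop :=
  Relation.ReflTransGen (SimpStep B)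

theorem Simplifies.append_left (h : Simplifies B l l') (a : List ι) :
    Simplifies B (a ++ l) (a ++ l') := by
  refine Relation.ReflTransGen.lift (a ++ ·) ?_ _ _ h
  rintro _ _ ⟨l₁, l₂, u, x, w, rfl, rfl, hB⟩
  exact ⟨a ++ l₁, l₂, u, x, w, by simp, by simp, hB⟩

theorem Simplifies.append_right (h : Simplifies B l l') (a : List ι) :
    Simplifies B (l ++ a) (l' ++ a) := by
  refine Relation.ReflTransGen.lift (· ++ a) ?_ _ _ h
  rintro _ _ ⟨l₁, l₂, u, x, w, rfl, rfl, hB⟩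
  exact ⟨l₁, l₂ ++ a, u, x, w, by simp, by simp, hB⟩

theorem Simplifies.reverse (h : Simplifies B l l') : Simplifies B l.reverse l'.reverse := by
  refine Relation.ReflTransGen.lift List.reverse ?_ _ _ h
  rintro _ _ ⟨l₁, l₂, u, x, w, rfl, rfl, hB⟩
  exact ⟨l₂.reverse, l₁.reverse, w, x, u, by simp, by simp, hB.symm⟩

theorem Simplifies.getLast?_eq (h : Simplifies B l l') : l'.getLast? = l.getLast? := by
  induction h with
  | refl => rfl
  | tail _ hstep ih =>
    obtain ⟨l₁, l₂, u, x, w, rfl, rfl, -⟩ := hstep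
    simpa [List.getLast?_append, List.getLast?_cons_cons] using ih

end Simplification

section ListsAndOrders

theorem eq_of_covBy_of_covBy_of_isChain {ι : Type*} [PartialOrder ι] {u v w : ι}
    (hchain : IsChain (· ≤ ·) (Set.Ici v)) (hu : v ⋖ u) (hw : v ⋖ w) : u = w :=
  (hchain.total hu.le hw.le).elim (fun h ↦ h.eq_of_not_lt (hw.2 hu.lt))
    fun h ↦ (h.eq_of_not_lt (hu.2 hw.lt)).symm

theorem exists_eq_append_cons_and_forall_iff {ι : Type*} [Preorder ι] {l : List ι}
    (hl : l.SortedLT) {w : ι} {P : ι → Prop} :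
    (∃ l₁ l₂, l = l₁ ++ w :: l₂ ∧ ∀ u ∈ l₁, P u) ↔ w ∈ l ∧ ∀ u ∈ l, u < w → P u := by
  constructor
  · rintro ⟨l₁, l₂, rfl, hP⟩
    obtain ⟨-, hcons, -⟩ := List.pairwise_append.1 hl.pairwise
    refine ⟨by simp, fun u hu huw ↦ ?_⟩
    rcases List.mem_append.1 hu with hu | hu
    · exact hP u hu
    · rcases List.mem_cons.1 hu with rfl | hu
      · exact (lt_irrefl u huw).elim
      · exact (lt_asymm huw (List.rel_of_pairwise_cons hcons hu)).elim
  · rintro ⟨hw, hP⟩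
    obtain ⟨l₁, l₂, rfl⟩ := List.append_of_mem hw
    obtain ⟨-, -, hlt⟩ := List.pairwise_append.1 hl.pairwise
    exact ⟨l₁, l₂, rfl, fun u hu ↦
      hP u (List.mem_append_left _ hu) (hlt u hu w List.mem_cons_self)⟩

theorem length_le_of_sortedGT_map {ι α : Type*} [Preorder α] {π : ι → α} {n : ℕ}
    (hn : (Set.range π).encard ≤ n) {l : List ι} (hl : (l.map π).SortedGT) : l.length ≤ n := by
  classical
  have hsub : ((l.map π).toFinset : Set α) ⊆ Set.range π := by
    intro
    simp +contextual [eq_comm]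
  have hcard := (Set.encard_le_encard hsub).trans hn
  rw [Set.encard_coe_eq_coe_finsetCard, List.toFinset_card_of_nodup hl.nodup,
    List.length_map] at hcard
  exact_mod_cast hcard

end ListsAndOrders

section SuperHighwayBag

variable {V ι α : Type*} [PartialOrder ι]

/-- The layer of `w` is at least that of every node strictly between `v` and `w`. For `v < w` this
says that `w` attains the maximum of the layers on the path from the parent of `v` to `w`. -/
def DominatesBetween [LE α] (π : ι → α) (v w : ι) : Prop :=
  ∀ u ∈ Set.Ioo v w, π u ≤ π w

/-- The super-highway bag `B'_v` of a node `v`, where `v ≤ w` means that `w` is an ancestor of `v`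
or `v` itself. The node `v` contributes its own bag because no node is strictly between `v` and
itself. -/
def superHighwayBag [LE α] (π : ι → α) (B : ι → Set V) (v : ι) : Set V :=
  ⋃ w ∈ {w | v ≤ w ∧ DominatesBetween π v w}, B w

section LE

variable [LE α] {π : ι → α} {B : ι → Set V} {u v w : ι} {x : V}

theorem mem_superHighwayBag :
    x ∈ superHighwayBag π B v ↔ ∃ w, v ≤ w ∧ DominatesBetween π v w ∧ x ∈ B w := by
  simp [superHighwayBag, and_assoc]

theorem subset_superHighwayBag (v : ι) : B v ⊆ superHighwayBag π B v := fun _ hx ↦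
  mem_superHighwayBag.2 ⟨v, le_rfl, fun _ hu ↦ (lt_asymm hu.1 hu.2).elim, hx⟩

theorem superHighwayBag_eq_union (v : ι) :
    superHighwayBag π B v = B v ∪ ⋃ w ∈ {w | v < w ∧ DominatesBetween π v w}, B w := by
  refine (Set.union_subset (subset_superHighwayBag v) ?_).antisymm' fun x hx ↦ ?_
  · exact Set.biUnion_subset_biUnion_left fun w hw ↦ ⟨hw.1.le, hw.2⟩
  · obtain ⟨w, hvw, hdom, hxw⟩ := mem_superHighwayBag.1 hx
    rcases hvw.eq_or_lt with rfl | hvw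
    · exact .inl hxw
    · exact .inr (Set.mem_biUnion ⟨hvw, hdom⟩ hxw)

theorem DominatesBetween.of_le (h : DominatesBetween π v w) (hvu : v ≤ u) :
    DominatesBetween π u w := fun _ hn ↦ h _ ⟨hvu.trans_lt hn.1, hn.2⟩

theorem DominatesBetween.of_covBy (h : v ⋖ w) : DominatesBetween π v w := fun _ hu ↦
  (h.2 hu.1 hu.2).elim

end LE

section Preorder

variable [Preorder α] {π : ι → α} {B : ι → Set V} {v w p : ι}

theorem DominatesBetween.trans (hchain : IsChain (· ≤ ·) (Set.Ici v)) (hvp : v < p)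
    (hp : DominatesBetween π v p) (hle : π p ≤ π w) (hw : DominatesBetween π p w) :
    DominatesBetween π v w := by
  rintro u ⟨hvu, huw⟩
  rcases eq_or_ne u p with rfl | hne
  · exact hle
  rcases hchain.total hvu.le hvp.le with hup | hpu
  · exact (hp u ⟨hvu, hup.lt_of_ne hne⟩).trans hle
  · exact hw u ⟨hpu.lt_of_ne' hne, huw⟩

theorem superHighwayBag_inter_subset (hchain : ∀ v : ι, IsChain (· ≤ ·) (Set.Ici v))
    (hB : ∀ x, {v | x ∈ B v}.OrdConnected) (hp : p ∈ Set.Ioo v w) (hvw : DominatesBetween π v w) :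
    superHighwayBag π B p ∩ superHighwayBag π B w ⊆ superHighwayBag π B v := by
  rintro x ⟨hxp, hxw⟩
  obtain ⟨z, hpz, hz, hxz⟩ := mem_superHighwayBag.1 hxp
  obtain ⟨y, hwy, -, hxy⟩ := mem_superHighwayBag.1 hxw
  rw [mem_superHighwayBag]
  by_cases hzw : z ≤ w
  · exact ⟨w, (hp.1.trans hp.2).le, hvw, (hB x).out hxz hxy ⟨hzw, hwy⟩⟩
  · have hwz : w < z :=
      ((hchain p).total hp.2.le hpz).elim (fun h ↦ h.lt_of_not_ge hzw) fun h ↦ (hzw h).elim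
    exact ⟨z, hp.1.le.trans hpz, hvw.trans (hchain v) (hp.1.trans hp.2) (hz w ⟨hp.2, hwz⟩)
      (hz.of_le hp.2.le), hxz⟩

theorem superHighwayBag_subset_of_forall_le (hchain : IsChain (· ≤ ·) (Set.Ici v))
    (hvw : v < w) (hdom : DominatesBetween π v w) (hmin : ∀ u, π w ≤ π u) :
    superHighwayBag π B w ⊆ superHighwayBag π B v := by
  intro x hx
  obtain ⟨z, hwz, hz, hxz⟩ := mem_superHighwayBag.1 hx
  rw [mem_superHighwayBag]
  exact ⟨z, hvw.le.trans hwz, hdom.trans hchain hvw (hmin z) hz, hxz⟩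

end Preorder

section LinearOrder

variable [LinearOrder α] {π : ι → α} {B : ι → Set V}

theorem exists_simplifies_cons_sortedGT (hchain : ∀ v : ι, IsChain (· ≤ ·) (Set.Ici v))
    (hB : ∀ x, {v | x ∈ B v}.OrdConnected) (v : ι) (l : List ι) (hl : (v :: l).IsChain (· ⋖ ·)) :
    ∃ L, Simplifies (superHighwayBag π B) (v :: l) (v :: L) ∧
      (v :: L).IsChain (fun u w ↦ u < w ∧ DominatesBetween π u w) ∧ (L.map π).SortedGT := by
  induction l generalizing v with
  | nil => exact ⟨[], .refl, .singleton v, by simp [List.sortedGT_iff_isChain]⟩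
  | cons p l ih =>
    obtain ⟨hvp, hl⟩ := List.isChain_cons_cons.1 hl
    obtain ⟨L, hsimp, hdom, hsorted⟩ := ih p hl
    have hsimp : Simplifies (superHighwayBag π B) (v :: p :: l) (v :: p :: L) :=
      hsimp.append_left [v]
    have keep (h : ((p :: L).map π).SortedGT) :
        ∃ L, Simplifies (superHighwayBag π B) (v :: p :: l) (v :: L) ∧
          (v :: L).IsChain (fun u w ↦ u < w ∧ DominatesBetween π u w) ∧ (L.map π).SortedGT :=
      ⟨p :: L, hsimp, List.isChain_cons_cons.2 ⟨⟨hvp.lt, .of_covBy hvp⟩, hdom⟩, h⟩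
    cases L with
    | nil => exact keep (by simp [List.sortedGT_iff_isChain])
    | cons w L =>
      obtain ⟨⟨hpw, hpdom⟩, hdom⟩ := List.isChain_cons_cons.1 hdom
      rcases lt_or_ge (π w) (π p) with hlt | hle
      · refine keep (List.sortedGT_iff_isChain.2 ?_)
        simpa using ⟨hlt, by simpa using hsorted.isChain⟩
      · have hvdom : DominatesBetween π v w :=
          .trans (hchain v) hvp.lt (.of_covBy hvp) hle hpdom
        exact ⟨w :: L,
          hsimp.tail ⟨[], L, v, p, w, rfl, rfl,
            .inl (superHighwayBag_inter_subset hchain hB ⟨hvp.lt, hpw⟩ hvdom)⟩,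
          List.isChain_cons_cons.2 ⟨⟨hvp.lt.trans hpw, hvdom⟩, hdom⟩, hsorted⟩

theorem exists_simplifies_concat_length_le (hchain : ∀ v : ι, IsChain (· ≤ ·) (Set.Ici v))
    (hB : ∀ x, {v | x ∈ B v}.OrdConnected) {q : ℕ} (hq : (Set.range π).encard ≤ (q + 1 : ℕ))
    {l : List ι} {a : ι} (hl : (l ++ [a]).IsChain (· ⋖ ·)) :
    ∃ L, Simplifies (superHighwayBag π B) (l ++ [a]) (L ++ [a]) ∧ L.length ≤ q + 1 ∧
      ((∃ b, π b < π a) → L.length ≤ q) ∧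
      ((∀ b, π a ≤ π b) → ∀ y ∈ L.getLast?, superHighwayBag π B a ⊆ superHighwayBag π B y) := by
  rcases l with - | ⟨v, l⟩
  · exact ⟨[], .refl, by simp⟩
  obtain ⟨L, hsimp, hdom, hsorted⟩ :=
    exists_simplifies_cons_sortedGT (π := π) hchain hB v (l ++ [a]) hl
  have hlast : (v :: L).getLast? = some a := by
    simpa [List.getLast?_cons] using hsimp.getLast?_eq
  rcases L.eq_nil_or_concat' with rfl | ⟨K, b, rfl⟩
  · obtain rfl : v = a := by simpa using hlast
    exact ⟨[], hsimp, by simp⟩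
  obtain rfl : b = a := by simpa [List.getLast?_cons] using hlast
  refine ⟨v :: K, hsimp, by simpa using length_le_of_sortedGT_map hq hsorted, ?_, ?_⟩
  · rintro ⟨c, hc⟩
    have hsorted' : ((K ++ [b, c]).map π).SortedGT := by
      rw [List.sortedGT_iff_isChain, List.map_append] at hsorted ⊢
      exact List.isChain_append_cons_cons.2 ⟨hsorted, hc, .singleton _⟩
    simpa using length_le_of_sortedGT_map hq hsorted'
  · intro hmin y hy
    obtain ⟨M, hM⟩ := List.getLast?_eq_some_iff.1 hy
    rw [← List.cons_append, hM, List.append_assoc] at hdom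
    obtain ⟨-, ⟨hyb, hyb_dom⟩, -⟩ := List.isChain_append_cons_cons.1 hdom
    exact superHighwayBag_subset_of_forall_le (hchain y) hyb hyb_dom hmin

theorem exists_simplifies_length_le (hchain : ∀ v : ι, IsChain (· ≤ ·) (Set.Ici v))
    (hB : ∀ x, {v | x ∈ B v}.OrdConnected) {q : ℕ} (hq : (Set.range π).encard ≤ (q + 1 : ℕ))
    {l₁ l₂ : List ι} {a : ι} (h₁ : (l₁ ++ [a]).IsChain (· ⋖ ·))
    (h₂ : (l₂ ++ [a]).IsChain (· ⋖ ·)) :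
    ∃ L, Simplifies (superHighwayBag π B) (l₁ ++ a :: l₂.reverse) L ∧
      L.length ≤ 2 * q + 2 := by
  obtain ⟨L₁, hsimp₁, hle₁, hlt₁, hsub⟩ := exists_simplifies_concat_length_le hchain hB hq h₁
  obtain ⟨L₂, hsimp₂, hle₂, hlt₂, -⟩ := exists_simplifies_concat_length_le hchain hB hq h₂
  have hsimp : Simplifies (superHighwayBag π B) (l₁ ++ a :: l₂.reverse)
      (L₁ ++ a :: L₂.reverse) := by
    refine .trans (b := L₁ ++ a :: l₂.reverse) ?_ ?_
    · simpa using hsimp₁.append_right l₂.reverse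
    · simpa using hsimp₂.reverse.append_left L₁
  by_cases hmin : ∃ b, π b < π a
  · refine ⟨_, hsimp, ?_⟩
    have := hlt₁ hmin
    have := hlt₂ hmin
    simp only [List.length_append, List.length_cons, List.length_reverse]
    lia
  push Not at hmin
  rcases L₁.eq_nil_or_concat' with rfl | ⟨K₁, y, rfl⟩
  · refine ⟨_, hsimp, ?_⟩
    simp only [List.nil_append, List.length_cons, List.length_reverse]
    lia
  rcases L₂.eq_nil_or_concat' with rfl | ⟨K₂, z, rfl⟩
  · refine ⟨_, hsimp, ?_⟩
    simp only [List.length_append, List.length_cons, List.length_reverse, List.length_nil] at hle₁ ⊢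
    lia
  refine ⟨K₁ ++ y :: z :: K₂.reverse, hsimp.tail ⟨K₁, K₂.reverse, y, a, z, by simp, rfl,
    .inl (Set.inter_subset_left.trans (hsub hmin y (by simp)))⟩, ?_⟩
  simp only [List.length_append, List.length_cons, List.length_reverse, List.length_nil]
    at hle₁ hle₂ ⊢
  lia

end LinearOrder

end SuperHighwayBag

section AncestorOrder

variable {ι : Type*} {T : SimpleGraph ι} {r : ι}

/-- The given partial order on the nodes of the tree `T` rooted at `r` is the ancestor order:
`v ≤ w` means that `w` lies on the path from `v` to `r`, so that `r` is the greatest node. -/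
def IsAncestorOrder [PartialOrder ι] (T : SimpleGraph ι) (r : ι) : Prop :=
  ∀ ⦃v w : ι⦄ (p : T.Walk v r), p.IsPath → (v ≤ w ↔ w ∈ p.support)

theorem exists_isAncestorOrder (hT : T.IsTree) (r : ι) :
    ∃ _ : PartialOrder ι, IsAncestorOrder T r := by
  have exists_path (v : ι) := (hT.existsUnique_path v r).exists
  have path_unique {v : ι} {p p' : T.Walk v r} (hp : p.IsPath) (hp' : p'.IsPath) : p = p' :=
    (hT.existsUnique_path v r).unique hp hp'
  let order : PartialOrder ι :=
    { le v w := ∃ p : T.Walk v r, p.IsPath ∧ w ∈ p.support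
      le_refl v := by
        obtain ⟨p, hp⟩ := exists_path v
        exact ⟨p, hp, p.start_mem_support⟩
      le_trans := by
        rintro u v w ⟨p, hp, hv⟩ ⟨p', hp', hw⟩
        obtain ⟨p₁, p₂, rfl⟩ := Walk.mem_support_iff_exists_append.1 hv
        obtain rfl := path_unique hp' hp.of_append_right
        exact ⟨_, hp, (Walk.mem_support_append_iff _ _).2 (.inr hw)⟩
      le_antisymm := by
        rintro v w ⟨p, hp, hw⟩ ⟨p', hp', hv⟩
        rcases p with - | ⟨hadj, p⟩
        · exact (List.mem_singleton.1 hw).symm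
        · rw [Walk.support_cons, List.mem_cons] at hw
          rcases hw with rfl | hw
          · rfl
          · obtain ⟨p₁, p₂, rfl⟩ := Walk.mem_support_iff_exists_append.1 hw
            obtain ⟨hp, hv'⟩ := (Walk.cons_isPath_iff _ _).1 hp
            obtain rfl := path_unique hp' hp.of_append_right
            exact (hv' ((Walk.mem_support_append_iff _ _).2 (.inr hv))).elim }
  refine ⟨order, fun v w p hp ↦ ⟨?_, fun hw ↦ ⟨p, hp, hw⟩⟩⟩
  rintro ⟨p', hp', hw⟩
  rwa [path_unique hp hp']

namespace IsAncestorOrder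

variable [PartialOrder ι] {u v w : ι}

theorem le_of_mem_support_append (hord : IsAncestorOrder T r) {p : T.Walk u v} {p' : T.Walk v r}
    (hp : (p.append p').IsPath) (hw : w ∈ p.support) : w ≤ v := by
  obtain ⟨p₁, p₂, rfl⟩ := Walk.mem_support_iff_exists_append.1 hw
  rw [← Walk.append_assoc] at hp
  exact (hord _ hp.of_append_right).2 (by simp)

theorem isChain_Ici (hord : IsAncestorOrder T r) (hT : T.IsTree) (v : ι) :
    IsChain (· ≤ ·) (Set.Ici v) := by
  intro a ha b hb _
  obtain ⟨p, hp⟩ := (hT.existsUnique_path v r).exists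
  obtain ⟨p₁, p₂, rfl⟩ := Walk.mem_support_iff_exists_append.1 ((hord p hp).1 ha)
  rcases (Walk.mem_support_append_iff _ _).1 ((hord _ hp).1 hb) with hb | hb
  · exact .inr (hord.le_of_mem_support_append hp hb)
  · exact .inl ((hord p₂ hp.of_append_right).2 hb)

theorem lt_iff_mem_support_of_isPath_cons (hord : IsAncestorOrder T r) {h : T.Adj u v}
    {p : T.Walk v r} (hp : (Walk.cons h p).IsPath) : u < w ↔ w ∈ p.support := by
  obtain ⟨-, hu⟩ := (Walk.cons_isPath_iff _ _).1 hp
  rw [lt_iff_le_and_ne, hord _ hp, Walk.support_cons, List.mem_cons]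
  grind

theorem covBy_of_isPath_cons (hord : IsAncestorOrder T r) {h : T.Adj u v} {p : T.Walk v r}
    (hp : (Walk.cons h p).IsPath) : u ⋖ v := by
  refine ⟨(hord.lt_iff_mem_support_of_isPath_cons hp).2 p.start_mem_support, fun w huw hwv ↦ ?_⟩
  exact hwv.not_ge ((hord p hp.of_cons).2 ((hord.lt_iff_mem_support_of_isPath_cons hp).1 huw))

theorem sortedLT_support (hord : IsAncestorOrder T r) {p : T.Walk v r} (hp : p.IsPath) :
    p.support.SortedLT := by
  rw [List.sortedLT_iff_isChain]
  induction p with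
  | nil => exact .singleton _
  | cons h p ih =>
    have hchain := ih hord hp.of_cons
    rw [← Walk.cons_tail_support] at hchain
    rw [Walk.support_cons, ← Walk.cons_tail_support]
    exact List.isChain_cons_cons.2 ⟨(hord.covBy_of_isPath_cons hp).lt, hchain⟩

theorem covBy_or_covBy_of_adj (hord : IsAncestorOrder T r) (hT : T.IsTree) (h : T.Adj u v) :
    u ⋖ v ∨ v ⋖ u := by
  obtain ⟨p, hp⟩ := (hT.existsUnique_path u r).exists
  obtain ⟨p', hp'⟩ := (hT.existsUnique_path v r).exists
  by_cases hv : v ∈ p.support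
  · have hu : u ∉ p'.support := fun hu ↦ h.ne (((hord p hp).2 hv).antisymm ((hord p' hp').2 hu))
    exact .inl (hord.covBy_of_isPath_cons (h := h) (hp'.cons hu))
  · exact .inr (hord.covBy_of_isPath_cons (h := h.symm) (hp.cons hv))

theorem exists_isPath_mem_support_iff (hord : IsAncestorOrder T r) (hT : T.IsTree) (hvw : v ≤ w) :
    ∃ p : T.Walk v w, p.IsPath ∧ ∀ u, u ∈ p.support ↔ u ∈ Set.Icc v w := by
  obtain ⟨p, hp⟩ := (hT.existsUnique_path v r).exists
  obtain ⟨p₁, p₂, rfl⟩ := Walk.mem_support_iff_exists_append.1 ((hord p hp).1 hvw)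
  refine ⟨p₁, hp.of_append_left, fun u ↦ ⟨fun hu ↦ ?_, fun ⟨hvu, huw⟩ ↦ ?_⟩⟩
  · exact ⟨(hord _ hp).2 ((Walk.mem_support_append_iff _ _).2 (.inl hu)),
      hord.le_of_mem_support_append hp hu⟩
  · refine ((Walk.mem_support_append_iff _ _).1 ((hord _ hp).1 hvu)).elim id fun hu ↦ ?_
    obtain rfl := huw.antisymm ((hord p₂ hp.of_append_right).2 hu)
    exact p₁.end_mem_support

theorem exists_support_eq_append_reverse (hord : IsAncestorOrder T r) (hT : T.IsTree) {s t : ι}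
    {p : T.Walk s t} (hp : p.IsPath) :
    ∃ l₁ a l₂, p.support = l₁ ++ a :: l₂.reverse ∧
      (l₁ ++ [a]).IsChain (· ⋖ ·) ∧ (l₂ ++ [a]).IsChain (· ⋖ ·) := by
  induction p with
  | @nil s => exact ⟨[], s, [], by simp⟩
  | @cons s u t h p ih =>
    obtain ⟨hp, hs⟩ := (Walk.cons_isPath_iff _ _).1 hp
    obtain ⟨l₁, a, l₂, hsupp, h₁, h₂⟩ := ih hp
    have hhead : u ∈ (l₁ ++ a :: l₂.reverse).head? := by
      rw [← hsupp, ← Walk.cons_tail_support]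
      rfl
    rcases hord.covBy_or_covBy_of_adj hT h with hsu | hus
    · refine ⟨s :: l₁, a, l₂, by simp [hsupp], ?_, h₂⟩
      cases l₁ <;> simp_all
    · cases l₁ with
      | nil =>
        obtain rfl : a = u := by simpa using hhead
        exact ⟨[], s, l₂ ++ [a], by simp [hsupp], .singleton s,
          by simpa using List.isChain_append_cons_cons.2 ⟨h₂, hus, .singleton s⟩⟩
      | cons v l₁ =>
        -- Impossible: the second node of `p` is a parent of `u`, hence equal to `s ∉ p.support`.
        obtain rfl : v = u := by simpa using hhead
        obtain ⟨y, l, hy⟩ := List.exists_cons_of_ne_nil (show l₁ ++ [a] ≠ [] by simp)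
        rw [List.cons_append, hy, List.isChain_cons_cons] at h₁
        have hys := eq_of_covBy_of_covBy_of_isChain (hord.isChain_Ici hT v) h₁.1 hus
        have hyl : y ∈ l₁ ++ [a] := by simp [hy]
        refine (hs ?_).elim
        rw [hsupp, ← hys]
        simp only [List.mem_append, List.mem_cons, List.not_mem_nil, or_false] at hyl ⊢
        tauto

end IsAncestorOrder

end AncestorOrder

section SuperHighwayDecomposition

variable {V ι α : Type*} {G : SimpleGraph V} {T : SimpleGraph ι} {B B' : ι → Set V} {r : ι}

theorem mem_support_of_mem_support_of_isPath (hT : T.IsAcyclic) {i j k : ι} {p : T.Walk i j}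
    (hp : p.IsPath) (p' : T.Walk i j) (hk : k ∈ p.support) : k ∈ p'.support := by
  classical
  obtain rfl : p = p'.bypass :=
    congrArg Subtype.val ((hT.subsingleton_path i j).elim ⟨p, hp⟩ ⟨p'.bypass, p'.bypass_isPath⟩)
  exact p'.support_bypass_subset_support hk

theorem IsTreeDecomp.of_subset_of_exists_walk (hTD : IsTreeDecomp G T B) (hsub : ∀ i, B i ⊆ B' i)
    (hwalk : ∀ i, ∀ x ∈ B' i, ∃ j, x ∈ B j ∧ ∃ p : T.Walk i j, ∀ k ∈ p.support, x ∈ B' k) :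
    IsTreeDecomp G T B' where
  isTree := hTD.isTree
  exists_bag v := (hTD.exists_bag v).imp fun i hi ↦ hsub i hi
  edge_bag _ _ huv := (hTD.edge_bag huv).imp fun i hi ↦ ⟨hsub i hi.1, hsub i hi.2⟩
  bag_connected x i j hi hj p hp k hk := by
    obtain ⟨i', hi', pi, hpi⟩ := hwalk i x hi
    obtain ⟨j', hj', pj, hpj⟩ := hwalk j x hj
    obtain ⟨p', hp'⟩ := (hTD.isTree.existsUnique_path i' j').exists
    have hk' := mem_support_of_mem_support_of_isPath hTD.isTree.isAcyclic hp
      (pi.append (p'.append pj.reverse)) hk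
    simp only [Walk.mem_support_append_iff, Walk.support_reverse, List.mem_reverse] at hk'
    rcases hk' with hk | hk | hk
    · exact hpi k hk
    · exact hsub k (hTD.bag_connected x i' j' hi' hj' p' hp' k hk)
    · exact hpj k hk

variable [PartialOrder ι]

theorem IsTreeDecomp.ordConnected (hTD : IsTreeDecomp G T B) (hord : IsAncestorOrder T r) (x : V) :
    {v | x ∈ B v}.OrdConnected := by
  refine ⟨fun v hv w hw u hu ↦ ?_⟩
  obtain ⟨p, hp, hsupp⟩ := hord.exists_isPath_mem_support_iff hTD.isTree (hu.1.trans hu.2)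
  exact hTD.bag_connected x v w hv hw p hp u ((hsupp u).2 hu)

theorem IsTreeDecomp.isTreeDecomp_superHighwayBag [LE α] (hTD : IsTreeDecomp G T B)
    (hord : IsAncestorOrder T r) (π : ι → α) : IsTreeDecomp G T (superHighwayBag π B) := by
  refine hTD.of_subset_of_exists_walk subset_superHighwayBag fun v x hx ↦ ?_
  obtain ⟨w, hvw, hdom, hxw⟩ := mem_superHighwayBag.1 hx
  obtain ⟨p, -, hsupp⟩ := hord.exists_isPath_mem_support_iff hTD.isTree hvw
  refine ⟨w, hxw, p, fun u hu ↦ ?_⟩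
  obtain ⟨hvu, huw⟩ := (hsupp u).1 hu
  exact mem_superHighwayBag.2 ⟨w, huw, hdom.of_le hvu, hxw⟩

theorem IsTreeDecomp.combDiamLE_superHighwayBag [LinearOrder α] (hTD : IsTreeDecomp G T B)
    (hord : IsAncestorOrder T r) {π : ι → α} {q : ℕ}
    (hq : (Set.range π).encard ≤ (q + 1 : ℕ)) :
    CombDiamLE T (superHighwayBag π B) (2 * q + 1) := by
  intro s t p hp
  obtain ⟨l₁, a, l₂, hsupp, h₁, h₂⟩ := hord.exists_support_eq_append_reverse hTD.isTree hp
  rw [hsupp]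
  exact exists_simplifies_length_le (hord.isChain_Ici hTD.isTree) (hTD.ordConnected hord) hq h₁ h₂

theorem IsAncestorOrder.superHighwayBag_root [LE α] (hord : IsAncestorOrder T r)
    (π : ι → α) (B : ι → Set V) : superHighwayBag π B r = B r := by
  refine (subset_superHighwayBag r).antisymm' fun x hx ↦ ?_
  obtain ⟨w, hrw, -, hxw⟩ := mem_superHighwayBag.1 hx
  obtain rfl : w = r := by simpa using (hord Walk.nil .nil).1 hrw
  exact hxw

theorem IsAncestorOrder.superHighwayBag_eq_of_isPath_cons [LE α]
    (hord : IsAncestorOrder T r) (π : ι → α) (B : ι → Set V) {u v : ι} {h : T.Adj v u}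
    {p : T.Walk u r} (hp : (Walk.cons h p).IsPath) :
    superHighwayBag π B v = B v ∪ ⋃ w ∈ {w : ι | ∃ l₁ l₂ : List ι,
      p.support = l₁ ++ w :: l₂ ∧ ∀ u ∈ l₁, π u ≤ π w}, B w := by
  simp only [superHighwayBag_eq_union, DominatesBetween, Set.mem_Ioo, and_imp,
    hord.lt_iff_mem_support_of_isPath_cons hp,
    exists_eq_append_cons_and_forall_iff (hord.sortedLT_support hp.of_cons)]

end SuperHighwayDecomposition

theorem encard_range_le_of_neg_one_le_of_lt {ι : Type*} {π : ι → ℤ} {q : ℕ}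
    (hπ : ∀ v, -1 ≤ π v ∧ π v < q) : (Set.range π).encard ≤ (q + 1 : ℕ) := by
  have hsub : Set.range π ⊆ (Finset.Ico (-1 : ℤ) q : Set ℤ) := by
    rintro _ ⟨v, rfl⟩
    simpa using hπ v
  refine (Set.encard_le_encard hsub).trans ?_
  rw [Set.encard_coe_eq_coe_finsetCard, Int.card_Ico]
  exact_mod_cast (by lia : ((q : ℤ) - -1).toNat ≤ q + 1)

theorem stmt6_general {V ι α : Type*} [LinearOrder α] {G : SimpleGraph V} {T : SimpleGraph ι}
    {B : ι → Set V} (hTD : IsTreeDecomp G T B) {r : ι} {par : ι → ι} (hpar : IsParentMap T r par)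
    {π : ι → α} {q : ℕ} (hq : (Set.range π).encard ≤ (q + 1 : ℕ)) {B' : ι → Set V}
    (hB'r : B' r = B r)
    (hB' : ∀ v, v ≠ r → ∀ pr : T.Walk (par v) r, pr.IsPath →
      B' v = B v ∪ ⋃ w ∈ {w : ι | ∃ l₁ l₂ : List ι,
        pr.support = l₁ ++ w :: l₂ ∧ ∀ u ∈ l₁, π u ≤ π w}, B w) :
    IsTreeDecomp G T B' ∧ CombDiamLE T B' (2 * q + 1) := by
  obtain ⟨_, hord⟩ := exists_isAncestorOrder hTD.isTree r
  obtain rfl : B' = superHighwayBag π B := by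
    funext v
    rcases eq_or_ne v r with rfl | hv
    · rw [hB'r, hord.superHighwayBag_root]
    · obtain ⟨hadj, hnotMem⟩ := hpar v hv
      obtain ⟨p, hp⟩ := (hTD.isTree.existsUnique_path (par v) r).exists
      rw [hB' v hv p hp,
        hord.superHighwayBag_eq_of_isPath_cons π B (h := hadj) (hp.cons (hnotMem p hp))]
  exact ⟨hTD.isTreeDecomp_superHighwayBag hord π, hTD.combDiamLE_superHighwayBag hord hq⟩

theorem stmt6 {V ι : Type*} [Fintype V] [Fintype ι]
    (G : SimpleGraph V) (T : SimpleGraph ι) (B : ι → Set V)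
    (hTD : IsTreeDecomp G T B)
    (r : ι) (par : ι → ι) (hpar : IsParentMap T r par)
    -- the level of a node: the number of edges on the (unique) path to the root
    (lvl : ι → ℕ)
    (hlvl : ∀ (v : ι) (p : T.Walk v r), p.IsPath → p.length = lvl v)
    -- the moduli m_0 < m_1 < … < m_{q-1}, positive, each dividing the next
    (q : ℕ) (hq : 1 ≤ q) (m : Fin q → ℕ)
    (hmpos : ∀ j, 0 < m j)
    (hmmono : ∀ j k : Fin q, j < k → m j < m k)
    (hmdvd : ∀ (j : ℕ) (h : j + 1 < q), m ⟨j, by omega⟩ ∣ m ⟨j + 1, h⟩)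
    -- the layer of a node: `π v = max { j | m j ∣ lvl v }`, or `-1` if no such `j`
    (pi : ι → ℤ)
    (hpi : ∀ v, (¬ m ⟨0, hq⟩ ∣ lvl v ∧ pi v = -1) ∨
      ∃ j : Fin q, m j ∣ lvl v ∧ pi v = (j : ℕ) ∧
        ∀ k : Fin q, m k ∣ lvl v → (k : ℕ) ≤ (j : ℕ))
    -- the super-highway decomposition
    (B' : ι → Set V)
    (hB'r : B' r = B r)
    (hB' : ∀ v, v ≠ r → ∀ pr : T.Walk (par v) r, pr.IsPath →
      B' v = B v ∪ ⋃ w ∈ {w : ι | ∃ l₁ l₂ : List ι,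
        pr.support = l₁ ++ w :: l₂ ∧ ∀ u ∈ l₁, pi u ≤ pi w}, B w) :
    IsTreeDecomp G T B' ∧ CombDiamLE T B' (2 * q + 1) := by
  refine stmt6_general hTD hpar (encard_range_le_of_neg_one_le_of_lt fun v ↦ ?_) hB'r hB'
  rcases hpi v with ⟨-, h⟩ | ⟨j, -, h, -⟩ <;> omega
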